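/- Let c > 0, γ > 0 and β = (β_1, …, β_r) ∈ ℕ^r, and set |β| = β_1 + ⋯ + β_r. There exist constants 0 < A ≤ B and N ∈ ℕ, depending only on r, c, γ, β, such that for all integers n ≥ N and all x ∈ ℝ^r: A · n^{(r+|β|)/2} ≤ Σ_{m ∈ ℤ^r, ‖m − n x‖ ≤ n^{1/2+γ} and ‖m − n x‖_∞ ≥ n^{1/2}} ( Π_{j=1}^r |m_j − n x_j|^{β_j} ) · exp(−c ‖m − n x‖² / n) ≤ B · n^{(r+|β|)/2}, where ‖·‖ is the Euclidean norm and ‖·‖_∞ the supremum norm on ℝ^r. (This is Lemma 2.4, equation (2.7), of the paper: removing the lattice points within distance n^{1/2} of the center in sup-norm does not change the order of the Gaussian-polynomial lattice sum.) -/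

import Mathlib

lemma aux_tele (G : ℤ → ℝ) (a b : ℤ) (h : a ≤ b) :
    ∑ k ∈ Finset.Ico a b, (G (k+1) - G k) = G b - G a := by
  induction b, h using Int.leInduction with
  | base => simp
  | succ b hb ih =>
    rw [← Finset.insert_Ico_right_eq_Ico_add_one hb, Finset.sum_insert (by simp), ih]; ring

lemma aux_H (t δ : ℝ) (h0 : 0 < δ) (h1 : δ ≤ 1) :
    δ / (2 + |t|)^2 ≤ (t + δ) / (1 + |t + δ|) - t / (1 + |t|) := by
  rcases le_total 0 t with ht | ht
  · rw [abs_of_nonneg ht, abs_of_nonneg (by linarith : 0 ≤ t + δ)]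
    have : (t + δ) / (1 + (t + δ)) - t / (1 + t) = δ / ((1 + (t+δ)) * (1+t)) := by
      field_simp; ring
    rw [this]
    apply div_le_div_of_nonneg_left h0.le (by positivity)
    nlinarith
  · rw [abs_of_nonpos ht]
    rcases le_total 0 (t+δ) with h | h
    · rw [abs_of_nonneg h]
      have h3 : (t + δ) / (2 - t) ≤ (t + δ) / (1 + (t + δ)) :=
        div_le_div_of_nonneg_left h (by linarith) (by linarith)
      have h4 : (-t) / (2 - t) ≤ (-t) / (1 + -t) :=
        div_le_div_of_nonneg_left (by linarith) (by linarith) (by linarith)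
      have h5 : δ / (2 + -t)^2 ≤ δ / (2 - t) := by
        apply div_le_div_of_nonneg_left h0.le (by linarith)
        nlinarith
      have h6 : δ / (2 - t) = (t + δ) / (2 - t) + (-t) / (2 - t) := by
        rw [← add_div]; congr 1; ring
      have h7 : (-t) / (1 + -t) = - (t / (1 + -t)) := by ring
      linarith
    · rw [abs_of_nonpos h]
      have h2 : 1 + -t ≠ 0 := by linarith
      have h3 : 1 + -(t+δ) ≠ 0 := by linarith
      have : (t + δ) / (1 + -(t + δ)) - t / (1 + -t) = δ / ((1 + -(t+δ)) * (1+ -t)) := by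
        field_simp; ring
      rw [this]
      apply div_le_div_of_nonneg_left h0.le (by apply mul_pos <;> linarith)
      nlinarith

lemma aux_abs (u : ℝ) : |u / (1 + |u|)| ≤ 1 := by
  rw [abs_div, abs_of_pos (by positivity : (0:ℝ) < 1 + |u|)]
  apply div_le_one_of_le₀ <;> linarith [abs_nonneg u]

lemma aux_exp (c : ℝ) (hc : 0 < c) (b : ℕ) (t : ℝ) (ht : 0 ≤ t) :
    t ^ b * Real.exp (-c * t^2) ≤
      ((b+2).factorial * Real.exp (2 + 1/(4*c))) * (1 / (2 + t)^2) := by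
  rw [mul_one_div, le_div_iff₀ (by positivity)]
  have h1 := Real.pow_div_factorial_le_exp (2+t) (by linarith) (b+2)
  rw [div_le_iff₀ (by positivity)] at h1
  have h2 : t ^ b ≤ (2+t)^b := pow_le_pow_left₀ ht (by linarith) b
  have h3 : (2 + t) + (-c * t^2) ≤ 2 + 1/(4*c) := by
    have : 2 + 1/(4*c) - ((2 + t) + (-c * t^2)) = c * (t - 1/(2*c))^2 := by
      field_simp; ring
    have : 0 ≤ c * (t - 1/(2*c))^2 := by positivity
    linarith
  calc t ^ b * Real.exp (-c * t^2) * (2+t)^2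
      ≤ (2+t) ^ b * Real.exp (-c * t^2) * (2+t)^2 := by gcongr
    _ = (2+t)^(b+2) * Real.exp (-c * t^2) := by ring
    _ ≤ (Real.exp (2+t) * (b+2).factorial) * Real.exp (-c * t^2) := by gcongr
    _ = (b+2).factorial * Real.exp ((2+t) + (-c * t^2)) := by rw [Real.exp_add (2+t)]; ring
    _ ≤ _ := by gcongr

lemma aux_upper (c : ℝ) (hc : 0 < c) (b : ℕ) (s : ℝ) (hs : 1 ≤ s) (y : ℝ) (a d : ℤ) :
    ∑ k ∈ Finset.Ico a d, |(k:ℝ) - y| ^ b * Real.exp (-c * ((k:ℝ) - y)^2 / s^2) ≤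
      (2 * ((b+2).factorial * Real.exp (2 + 1/(4*c)))) * s^(1+b) := by
  have hs0 : 0 < s := by linarith
  set K : ℝ := (b+2).factorial * Real.exp (2 + 1/(4*c)) with hK
  have hK0 : 0 < K := by positivity
  rcases le_total d a with had | had
  · rw [Finset.Ico_eq_empty (by simpa using had)]; simp only [Finset.sum_empty]; positivity
  let G : ℤ → ℝ := fun k => (((k:ℝ) - y)/s) / (1 + |((k:ℝ) - y)/s|)
  have key : ∀ k ∈ Finset.Ico a d, |(k:ℝ) - y| ^ b * Real.exp (-c * ((k:ℝ) - y)^2 / s^2) ≤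
      (K * s^(1+b)) * (G (k+1) - G k) := by
    intro k _
    have e := aux_exp c hc b (|(k:ℝ) - y| / s) (by positivity)
    have h := aux_H (((k:ℝ) - y)/s) (1/s) (by positivity) (by rw [div_le_one hs0]; exact hs)
    have h' : G (k+1) = (((k:ℝ) - y)/s + 1/s) / (1 + |((k:ℝ) - y)/s + 1/s|) := by
      simp only [G]
      have : (((k+1 : ℤ):ℝ) - y)/s = ((k:ℝ) - y)/s + 1/s := by push_cast; ring
      rw [this]
    rw [abs_div, abs_of_pos hs0] at h
    have h2 : (1/s) * (1 / (2 + |(k:ℝ) - y| / s)^2) ≤ G (k+1) - G k := by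
      rw [h', mul_one_div]
      simp only [G]
      rw [abs_div ((k:ℝ) - y), abs_of_pos hs0]
      exact h
    have h3 : |(k:ℝ) - y| ^ b * Real.exp (-c * ((k:ℝ) - y)^2 / s^2) =
        s^b * ((|(k:ℝ) - y| / s)^b * Real.exp (-c * (|(k:ℝ) - y| / s)^2)) := by
      rw [div_pow, div_pow, sq_abs, mul_div_assoc]
      field_simp
    rw [h3]
    calc _ ≤ s^b * (K * (1 / (2 + |(k:ℝ) - y| / s)^2)) := by gcongr
      _ = (K * s^(1+b)) * ((1/s) * (1 / (2 + |(k:ℝ) - y| / s)^2)) := by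
        rw [pow_add, pow_one]; field_simp
      _ ≤ _ := by gcongr
  refine (Finset.sum_le_sum key).trans ?_
  rw [← Finset.mul_sum, aux_tele G a d had]
  have h1 := abs_le.1 (aux_abs (((d:ℝ) - y)/s))
  have h2 := abs_le.1 (aux_abs (((a:ℝ) - y)/s))
  have h3 : G d - G a ≤ 2 := by simp only [G]; linarith [h1.2, h2.1]
  have h4 : 0 < K * s^(1+b) := by positivity
  nlinarith

lemma aux_lower (s y : ℝ) (hs : 1 ≤ s) : ∃ J : Finset ℤ, s / 2 ≤ J.card ∧
    ∀ k ∈ J, s ≤ (k:ℝ) - y ∧ (k:ℝ) - y ≤ 2 * s := by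
  refine ⟨Finset.Ico ⌈y + s⌉ (⌈y+s⌉ + ⌊s⌋₊), ?_, ?_⟩
  · rw [Int.card_Ico]
    have : (⌈y+s⌉ + (⌊s⌋₊:ℤ) - ⌈y+s⌉).toNat = ⌊s⌋₊ := by simp
    rw [this]
    have h1 := Nat.lt_floor_add_one s
    have h2 : 1 ≤ ⌊s⌋₊ := by rw [Nat.one_le_floor_iff]; exact hs
    have h2' : (1:ℝ) ≤ ⌊s⌋₊ := by exact_mod_cast h2
    linarith
  · intro k hk
    rw [Finset.mem_Ico] at hk
    have h1 : ((⌈y+s⌉:ℤ):ℝ) ≤ k := by exact_mod_cast hk.1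
    have h2 : (k:ℝ) + 1 ≤ (⌈y+s⌉:ℤ) + (⌊s⌋₊:ℝ) := by exact_mod_cast hk.2
    have h3 := Int.le_ceil (y+s)
    have h4 := Int.ceil_lt_add_one (y+s)
    have h5 := Nat.floor_le (by linarith : 0 ≤ s)
    constructor <;> linarith


/-- Lemma 2.4, equation (2.7): the Gaussian-polynomial lattice sum over the window
`‖m − n x‖ ≤ n^{1/2+γ}` with the points of sup-norm distance `< n^{1/2}` from the
center removed is still comparable to `n^{(r+|β|)/2}`, uniformly in `x ∈ ℝ^r`. -/
theorem stmt_5 (r : ℕ) (hr : 1 ≤ r) (c γ : ℝ) (hc : 0 < c) (hγ : 0 < γ) (β : Fin r → ℕ) :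
    ∃ A B : ℝ, ∃ N : ℕ, 0 < A ∧ A ≤ B ∧
      ∀ n : ℕ, N ≤ n → ∀ x : Fin r → ℝ,
        A * (n : ℝ) ^ (((r : ℝ) + ∑ j, (β j : ℝ)) / 2) ≤
            (∑' m : Fin r → ℤ,
              Set.indicator
                {m : Fin r → ℤ |
                  Real.sqrt (∑ j, ((m j : ℝ) - n * x j) ^ 2) ≤ (n : ℝ) ^ ((1 : ℝ) / 2 + γ) ∧
                    (n : ℝ) ^ ((1 : ℝ) / 2) ≤ ⨆ j, |(m j : ℝ) - n * x j|}
                (fun m => (∏ j, |(m j : ℝ) - n * x j| ^ β j) *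
                  Real.exp (-c * (∑ j, ((m j : ℝ) - n * x j) ^ 2) / n)) m) ∧
          (∑' m : Fin r → ℤ,
              Set.indicator
                {m : Fin r → ℤ |
                  Real.sqrt (∑ j, ((m j : ℝ) - n * x j) ^ 2) ≤ (n : ℝ) ^ ((1 : ℝ) / 2 + γ) ∧
                    (n : ℝ) ^ ((1 : ℝ) / 2) ≤ ⨆ j, |(m j : ℝ) - n * x j|}
                (fun m => (∏ j, |(m j : ℝ) - n * x j| ^ β j) *
                  Real.exp (-c * (∑ j, ((m j : ℝ) - n * x j) ^ 2) / n)) m) ≤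
            B * (n : ℝ) ^ (((r : ℝ) + ∑ j, (β j : ℝ)) / 2) := by
  have hc4 : 0 < (1/2:ℝ)^r * Real.exp (-(4*c*r)) := by positivity
  obtain ⟨N, hN⟩ := Filter.eventually_atTop.1
    ((((tendsto_rpow_atTop hγ).comp tendsto_natCast_atTop_atTop).eventually_ge_atTop
      (2 * Real.sqrt r)))
  refine ⟨(1/2:ℝ)^r * Real.exp (-(4*c*r)),
    max ((1/2:ℝ)^r * Real.exp (-(4*c*r)))
      (∏ j, (2 * (((β j)+2).factorial * Real.exp (2 + 1/(4*c))))), max N 1,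
    hc4, le_max_left _ _, ?_⟩
  intro n hn x
  have hn1 : (1:ℝ) ≤ n := by exact_mod_cast (le_max_right N 1).trans hn
  have hn0 : (0:ℝ) < n := by linarith
  have hnN := hN n ((le_max_left N 1).trans hn)
  simp only [Function.comp] at hnN
  obtain ⟨s, hsd⟩ : ∃ s : ℝ, s = (n:ℝ) ^ ((1:ℝ)/2) := ⟨_, rfl⟩
  have hs : 1 ≤ s := by rw [hsd]; exact Real.one_le_rpow hn1 (by norm_num)
  have hs0 : 0 < s := by linarith
  have hs2 : s^2 = n := by
    rw [hsd, ← Real.sqrt_eq_rpow]; exact Real.sq_sqrt hn0.le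
  have hpow : (n : ℝ) ^ (((r : ℝ) + ∑ j, (β j : ℝ)) / 2) = ∏ j, s^(1 + β j) := by
    rw [Finset.prod_pow_eq_pow_sum, ← Real.rpow_natCast, hsd, ← Real.rpow_mul hn0.le]
    congr 1
    rw [Finset.sum_add_distrib]
    simp
    ring
  rw [hpow, Real.rpow_add hn0, ← hsd]
  obtain ⟨R, hR⟩ : ∃ R : ℝ, R = s * (n:ℝ)^γ := ⟨_, rfl⟩
  have hRs : 2 * Real.sqrt r * s ≤ R := by rw [hR]; nlinarith
  rw [← hR]
  obtain ⟨y, hy⟩ : ∃ y : Fin r → ℝ, y = fun j => n * x j := ⟨_, rfl⟩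
  have hyj : ∀ j, n * x j = y j := fun j => by rw [hy]
  simp only [hyj]
  set f : (Fin r → ℤ) → ℝ := fun m => (∏ j, |(m j : ℝ) - y j| ^ β j) *
                  Real.exp (-c * (∑ j, ((m j : ℝ) - y j) ^ 2) / n) with hf
  set S : Set (Fin r → ℤ) := {m : Fin r → ℤ |
                  Real.sqrt (∑ j, ((m j : ℝ) - y j) ^ 2) ≤ R ∧
                    s ≤ ⨆ j, |(m j : ℝ) - y j|} with hS
  have hf0 : ∀ m, 0 ≤ f m := fun m => by simp only [hf]; positivity
  let T : Finset (Fin r → ℤ) := Fintype.piFinset fun j => Finset.Ico ⌊y j - R⌋ (⌊y j + R⌋ + 1)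
  have hST : ∀ m ∈ S, m ∈ T := by
    intro m hm
    rw [Fintype.mem_piFinset]
    intro j
    have h1 : |(m j : ℝ) - y j| ≤ R := by
      rw [← Real.sqrt_sq_eq_abs]
      refine le_trans (Real.sqrt_le_sqrt ?_) hm.1
      exact Finset.single_le_sum (f := fun j => ((m j : ℝ) - y j)^2)
        (fun i _ => sq_nonneg _) (Finset.mem_univ j)
    rw [abs_le] at h1
    rw [Finset.mem_Ico]
    constructor
    · have : (⌊y j - R⌋ : ℝ) ≤ m j := (Int.floor_le _).trans (by linarith)
      exact_mod_cast this
    · rw [Int.lt_add_one_iff, Int.le_floor]; linarith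
  have htsum : ∑' m, S.indicator f m = ∑ m ∈ T, S.indicator f m := by
    apply tsum_eq_sum
    intro m hm
    exact Set.indicator_of_notMem (fun h => hm (hST m h)) f
  rw [htsum]
  have hfprod : ∀ m, f m = ∏ j, (|(m j : ℝ) - y j| ^ β j *
      Real.exp (-c * ((m j : ℝ) - y j)^2 / s^2)) := by
    intro m
    simp only [hf]
    rw [Finset.prod_mul_distrib, ← Real.exp_sum, hs2, Finset.mul_sum, Finset.sum_div]
  constructor
  · choose J hJc hJ using fun j => aux_lower s (y j) hs
    have hJS : ∀ m ∈ Fintype.piFinset J, m ∈ S := by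
      intro m hm
      rw [Fintype.mem_piFinset] at hm
      refine ⟨?_, ?_⟩
      · refine le_trans ?_ hRs
        rw [Real.sqrt_le_left (by positivity)]
        calc ∑ j, ((m j : ℝ) - y j) ^ 2 ≤ ∑ j : Fin r, (2*s)^2 := by
              apply Finset.sum_le_sum
              intro j _
              have := hJ j _ (hm j)
              apply pow_le_pow_left₀ (by linarith) this.2
          _ = (2 * Real.sqrt r * s)^2 := by
              simp only [Finset.sum_const, Finset.card_univ, Fintype.card_fin, nsmul_eq_mul]
              rw [mul_pow, mul_pow, mul_pow, Real.sq_sqrt (by positivity)]; ring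
      · let j0 : Fin r := ⟨0, hr⟩
        refine le_trans ?_ (le_ciSup (f := fun j => |(m j : ℝ) - y j|) (Set.finite_range _).bddAbove j0)
        exact (hJ j0 _ (hm j0)).1.trans (le_abs_self _)
    have hfl : ∀ m ∈ Fintype.piFinset J, ∏ j, (s ^ β j * Real.exp (-(4*c))) ≤ f m := by
      intro m hm
      rw [Fintype.mem_piFinset] at hm
      rw [hfprod]
      apply Finset.prod_le_prod
      · intro j _; positivity
      · intro j _
        have h := hJ j _ (hm j)
        have h2 : ((m j : ℝ) - y j)^2 ≤ (2*s)^2 := pow_le_pow_left₀ (by linarith) h.2 2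
        have h3 : -(4*c) ≤ -c * ((m j : ℝ) - y j)^2 / s^2 := by
          rw [le_div_iff₀ (by positivity)]
          nlinarith
        have h4 := h.1.trans (le_abs_self _)
        gcongr
    calc (1/2:ℝ)^r * Real.exp (-(4*c*r)) * ∏ j, s^(1 + β j)
        = (∏ j : Fin r, (s/2)) * ∏ j, (s ^ β j * Real.exp (-(4*c))) := by
          rw [← Finset.prod_mul_distrib]
          have : Real.exp (-(4*c*r)) = Real.exp (-(4*c)) ^ r := by
            rw [← Real.exp_nat_mul]; congr 1; ring
          have h2 : (1/2:ℝ)^r * Real.exp (-(4*c*r)) = ∏ j : Fin r, ((1/2) * Real.exp (-(4*c))) := by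
            rw [this, Finset.prod_const, mul_pow]; simp
          rw [h2, ← Finset.prod_mul_distrib]
          apply Finset.prod_congr rfl
          intro j _
          ring
      _ ≤ (∏ j : Fin r, ((J j).card : ℝ)) * ∏ j, (s ^ β j * Real.exp (-(4*c))) := by
          apply mul_le_mul_of_nonneg_right _ (by positivity)
          apply Finset.prod_le_prod
          · intro j _; positivity
          · intro j _; exact hJc j
      _ = ∑ m ∈ Fintype.piFinset J, ∏ j, (s ^ β j * Real.exp (-(4*c))) := by
          rw [Finset.sum_const, Fintype.card_piFinset, nsmul_eq_mul]; push_cast; rfl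
      _ ≤ ∑ m ∈ Fintype.piFinset J, S.indicator f m := by
          apply Finset.sum_le_sum
          intro m hm
          rw [Set.indicator_of_mem (hJS m hm)]
          exact hfl m hm
      _ ≤ _ := by
          apply Finset.sum_le_sum_of_subset_of_nonneg
          · intro m hm; exact hST m (hJS m hm)
          · intro m _ _; exact Set.indicator_nonneg (fun m _ => hf0 m) m
  · calc ∑ m ∈ T, S.indicator f m ≤ ∑ m ∈ T, f m := by
          apply Finset.sum_le_sum
          intro m _
          exact Set.indicator_le_self' (fun m _ => hf0 m) m
      _ = ∏ j, ∑ k ∈ Finset.Ico ⌊y j - R⌋ (⌊y j + R⌋ + 1), (|(k : ℝ) - y j| ^ β j *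
            Real.exp (-c * ((k : ℝ) - y j)^2 / s^2)) := by
          rw [Finset.prod_univ_sum]
          exact Finset.sum_congr rfl fun m _ => hfprod m
      _ ≤ ∏ j, ((2 * (((β j)+2).factorial * Real.exp (2 + 1/(4*c)))) * s^(1 + β j)) := by
          apply Finset.prod_le_prod
          · intro j _; exact Finset.sum_nonneg fun k _ => by positivity
          · intro j _; exact aux_upper c hc (β j) s hs (y j) _ _
      _ = (∏ j, (2 * (((β j)+2).factorial * Real.exp (2 + 1/(4*c))))) * ∏ j, s^(1 + β j) := by
          rw [Finset.prod_mul_distrib]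
      _ ≤ _ := by
          apply mul_le_mul_of_nonneg_right (le_max_right _ _) (by positivity)
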